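/- arXiv:1506.06539 — 2 statements merged into one kernel-verified Lean document; each statement's English description precedes it below -/
import Mathlib

section
/- Fix c ∈ ℂ with c ≠ 0 and N ≥ 1. Let μ_1,…,μ_N and pairwise distinct λ_1,…,λ_N be complex numbers satisfying μ_k ≠ λ_j and λ_m−λ_j±ic ≠ 0, let λ_p, λ_s be admissible auxiliary parameters, and assume P_λ = P_μ, where P_λ = Σ_j λ_j and P_μ = Σ_j μ_j. Then (−1)^N (𝒥/(6c))·Π·∏_{j=1}^{N}(V⁺_j−V⁻_j)·det_N(δ_{jk}+U_{jk})/[(V⁺_p−V⁻_p)(V⁺_s−V⁻_s)] = (−1)^{N+1}·[i(E_λ−E_μ)²/(2Nc)]·Π·∏_{j=1}^{N}(V⁺_j−V⁻_j)·det_N(δ_{jk}+U^{(2)}_{jk})/(V⁺_p−V⁻_p), where Π = ∏_{j,k=1}^{N}(λ_j−λ_k+ic)·∏_{j,k=1}^{N}(λ_j−μ_k)^{−1}, and where under the assumption P_λ = P_μ one has 𝒥 = 3(E_λ−E_μ)². -/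
open Complex Finset Matrix

namespace LL

noncomputable def Kk (c x y : ℂ) : ℂ := 2 * c / ((x - y) ^ 2 + c ^ 2)

noncomputable def Vp {N M : ℕ} (c : ℂ) (μ : Fin N → ℂ) (lam : Fin M → ℂ) (x : ℂ) : ℂ :=
  (∏ m, (μ m - x + I * c)) / ∏ m, (lam m - x + I * c)

noncomputable def Vm {N M : ℕ} (c : ℂ) (μ : Fin N → ℂ) (lam : Fin M → ℂ) (x : ℂ) : ℂ :=
  (∏ m, (μ m - x - I * c)) / ∏ m, (lam m - x - I * c)

noncomputable def Xi {N M : ℕ} (μ : Fin N → ℂ) (lam : Fin M → ℂ) (j : Fin M) : ℂ :=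
  (∏ m, (μ m - lam j)) / ∏ m ∈ Finset.univ.erase j, (lam m - lam j)

noncomputable def Umat {N M : ℕ} (c : ℂ) (μ : Fin N → ℂ) (lam : Fin M → ℂ) (lp ls : ℂ) :
    Matrix (Fin M) (Fin M) ℂ := fun j k =>
  I / (Vp c μ lam (lam j) - Vm c μ lam (lam j)) * Xi μ lam j *
    (Kk c (lam j) (lam k) - Kk c lp (lam k) * Kk c ls (lam j))

noncomputable def U1mat {N M : ℕ} (c : ℂ) (μ : Fin N → ℂ) (lam : Fin M → ℂ) (lp : ℂ) :
    Matrix (Fin M) (Fin M) ℂ := fun j k =>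
  I / (Vp c μ lam (lam j) - Vm c μ lam (lam j)) * Xi μ lam j *
    (Kk c (lam j) (lam k) - Kk c lp (lam k))

noncomputable def U2mat {N M : ℕ} (c : ℂ) (μ : Fin N → ℂ) (lam : Fin M → ℂ) (lp : ℂ) :
    Matrix (Fin M) (Fin M) ℂ := fun j k =>
  U1mat c μ lam lp j k + I / (Vp c μ lam (lam j) - Vm c μ lam (lam j)) * Kk c lp (lam k)

noncomputable def HR {N M : ℕ} (c sc : ℂ) (R : ℕ) (μ : Fin N → ℂ) (lam : Fin M → ℂ)
    (lp ls : ℂ) : ℂ :=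
  (I * sc) ^ R / (c ^ (2 * R - 1) * ((R - 1).factorial : ℂ)) * (-1 : ℂ) ^ (N * (R - 1)) *
    (∏ j, ∏ k, (lam j - lam k + I * c)) *
    (∏ j, ∏ k, (lam j - μ k)⁻¹) *
    (∏ j, (Vp c μ lam (lam j) - Vm c μ lam (lam j))) *
    (1 + Umat c μ lam lp ls).det /
    ((Vp c μ lam lp - Vm c μ lam lp) * (Vp c μ lam ls - Vm c μ lam ls))

noncomputable def Jcal {N : ℕ} (μ lam : Fin N → ℂ) : ℂ :=
  (∑ j, lam j - ∑ j, μ j) ^ 4 -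
    4 * (∑ j, lam j - ∑ j, μ j) * (∑ j, lam j ^ 3 - ∑ j, μ j ^ 3) +
    3 * (∑ j, lam j ^ 2 - ∑ j, μ j ^ 2) ^ 2

noncomputable def Fff {N : ℕ} (c : ℂ) (μ lam : Fin N → ℂ) (lp ls : ℂ) : ℂ :=
  (-1 : ℂ) ^ N * (Jcal μ lam / (6 * c)) *
    (∏ j, ∏ k, (lam j - lam k + I * c)) *
    (∏ j, ∏ k, (lam j - μ k)⁻¹) *
    (∏ j, (Vp c μ lam (lam j) - Vm c μ lam (lam j))) *
    (1 + Umat c μ lam lp ls).det /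
    ((Vp c μ lam lp - Vm c μ lam lp) * (Vp c μ lam ls - Vm c μ lam ls))

noncomputable def Tcal {N M : ℕ} (μ : Fin N → ℂ) (lam : Fin M → ℂ) : ℂ :=
  (1 / 2 : ℂ) * ((∑ j, lam j - ∑ j, μ j) ^ 2 - (∑ j, lam j ^ 2 - ∑ j, μ j ^ 2))

noncomputable def Gff {N M : ℕ} (c sc : ℂ) (μ : Fin N → ℂ) (lam : Fin M → ℂ) (lp ls : ℂ) : ℂ :=
  -I * (Tcal μ lam / (c * sc)) *
    (∏ j, ∏ k, (lam j - lam k + I * c)) *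
    (∏ j, ∏ k, (lam j - μ k)⁻¹) *
    (∏ j, (Vp c μ lam (lam j) - Vm c μ lam (lam j))) *
    (1 + Umat c μ lam lp ls).det /
    ((Vp c μ lam lp - Vm c μ lam lp) * (Vp c μ lam ls - Vm c μ lam ls))

noncomputable def fsc (c x y : ℂ) : ℂ := (x - y + I * c) / (x - y)

noncomputable def stringRap (cb : ℝ) (M : ℕ) (δ : Fin M → ℂ) (j : Fin M) : ℂ :=
  I * ((cb : ℂ) / 2) * ((M : ℂ) - 1 - 2 * (j.val : ℂ)) + I * δ j

end LL

open LL

theorem LLaux.det_rank {n : ℕ} (M : Matrix (Fin n) (Fin n) ℂ) (d u w v : Fin n → ℂ)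
    (hM : d ᵥ* M = 0) (hw : d ⬝ᵥ w ≠ 0) :
    (M - vecMulVec u v).det = (d ⬝ᵥ u) / (d ⬝ᵥ w) * (M - vecMulVec w v).det := by
  have key : (1 + vecMulVec (u - w) ((d ⬝ᵥ w)⁻¹ • d)) * (M - vecMulVec w v)
      = M - vecMulVec u v := by
    rw [add_mul, one_mul, vecMulVec_mul, Matrix.smul_vecMul, Matrix.vecMul_sub, hM, vecMul_vecMulVec,
      zero_sub]
    ext i j
    simp only [Matrix.add_apply, Matrix.sub_apply, vecMulVec_apply, Pi.smul_apply, Pi.neg_apply,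
      Pi.sub_apply, smul_eq_mul]
    field_simp
    ring
  have hdet : (1 + vecMulVec (u - w) ((d ⬝ᵥ w)⁻¹ • d)).det = (d ⬝ᵥ u) / (d ⬝ᵥ w) := by
    rw [vecMulVec_eq Unit, det_one_add_replicateCol_mul_replicateRow, smul_dotProduct,
      dotProduct_sub, smul_eq_mul]
    field_simp
    ring
  rw [← key, det_mul, hdet]

theorem LLaux.Xi_eq {N : ℕ} (μ lam : Fin N → ℂ) (hN : 1 ≤ N) (j : Fin N) :
    Xi μ lam j = -((∏ m, (lam j - μ m)) / ∏ m ∈ Finset.univ.erase j, (lam j - lam m)) := by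
  unfold Xi
  have h1 : ∏ m, (μ m - lam j) = (-1) ^ N * ∏ m, (lam j - μ m) := by
    rw [show (fun m => μ m - lam j) = fun m => (-1) * (lam j - μ m) by ext; ring,
      Finset.prod_mul_distrib]; simp
  have h2 : ∏ m ∈ Finset.univ.erase j, (lam m - lam j)
      = (-1) ^ (N - 1) * ∏ m ∈ Finset.univ.erase j, (lam j - lam m) := by
    rw [show (fun m => lam m - lam j) = fun m => (-1) * (lam j - lam m) by ext; ring,
      Finset.prod_mul_distrib]; simp
  obtain ⟨k, rfl⟩ : ∃ k, N = k + 1 := ⟨N - 1, by omega⟩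
  rw [h1, h2, Nat.add_sub_cancel, pow_succ, mul_assoc, mul_div_mul_left _ _ (by simp)]
  ring

open Polynomial in
theorem LLaux.deg_lt {N : ℕ} (μ lam : Fin N → ℂ) :
    (∏ m, (X - C (μ m)) - ∏ m, (X - C (lam m)) : ℂ[X]).degree < (#(Finset.univ : Finset (Fin N)) : ℕ) := by
  have hd : ∀ f : Fin N → ℂ, (∏ m, (X - C (f m)) : ℂ[X]).degree = N := by
    intro f; rw [degree_prod]; simp
  have := degree_sub_lt_left ((hd μ).trans (hd lam).symm) (monic_prod_X_sub_C μ _).ne_zero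
    ((monic_prod_X_sub_C μ _).leadingCoeff.trans (monic_prod_X_sub_C lam _).leadingCoeff.symm)
  rw [hd] at this
  simpa using this

open Polynomial in
theorem LLaux.eval_node {N : ℕ} (μ lam : Fin N → ℂ) (j : Fin N) :
    (∏ m, (X - C (μ m)) - ∏ m, (X - C (lam m)) : ℂ[X]).eval (lam j) = ∏ m, (lam j - μ m) := by
  have : ∏ m, (lam j - lam m) = 0 := Finset.prod_eq_zero (Finset.mem_univ j) (sub_self _)
  simp [eval_prod, this]

open Polynomial in
theorem LLaux.sum_Xi {N : ℕ} (hN : 1 ≤ N) (μ lam : Fin N → ℂ) (hinj : Function.Injective lam) :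
    ∑ j, Xi μ lam j = ∑ j, μ j - ∑ j, lam j := by
  have h := Lagrange.coeff_eq_sum (s := Finset.univ) (v := lam) hinj.injOn (LLaux.deg_lt μ lam)
  simp only [LLaux.eval_node] at h
  rw [coeff_sub, prod_X_sub_C_coeff_card_pred _ _ (by simp; omega),
    prod_X_sub_C_coeff_card_pred _ _ (by simp; omega)] at h
  simp only [LLaux.Xi_eq μ lam hN, Finset.sum_neg_distrib, ← h]
  ring

open Polynomial in
theorem LLaux.pf {N : ℕ} (hN : 1 ≤ N) (μ lam : Fin N → ℂ) (hinj : Function.Injective lam)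
    (z : ℂ) (hz : ∀ j, z ≠ lam j) :
    (∏ m, (z - μ m)) / ∏ m, (z - lam m) = 1 - ∑ j, Xi μ lam j * (z - lam j)⁻¹ := by
  have h := Lagrange.eq_interpolate (s := Finset.univ) (v := lam) hinj.injOn (LLaux.deg_lt μ lam)
  have h2 := congrArg (Polynomial.eval z) h
  rw [Lagrange.eval_interpolate_not_at_node _ (fun i _ => hz i)] at h2
  simp only [LLaux.eval_node] at h2
  rw [Lagrange.eval_nodal] at h2
  simp only [eval_sub, eval_prod, eval_X, eval_C, Lagrange.nodalWeight] at h2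
  have hne : ∏ m, (z - lam m) ≠ 0 := Finset.prod_ne_zero_iff.2 fun m _ => sub_ne_zero.2 (hz m)
  rw [div_eq_iff hne, sub_mul, one_mul, eq_sub_iff_add_eq, ← eq_sub_iff_add_eq', ← neg_sub, h2,
    mul_comm, ← mul_neg, ← Finset.sum_neg_distrib]
  congr 1
  refine Finset.sum_congr rfl fun j _ => ?_
  rw [LLaux.Xi_eq μ lam hN, Finset.prod_inv_distrib]
  ring

theorem LLaux.prod_flip {N : ℕ} (μ lam : Fin N → ℂ) (x a : ℂ) :
    (∏ m, (μ m - x + a)) / ∏ m, (lam m - x + a)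
      = (∏ m, ((x - a) - μ m)) / ∏ m, ((x - a) - lam m) := by
  have h : ∀ f : Fin N → ℂ, ∏ m, (f m - x + a) = (-1) ^ N * ∏ m, ((x - a) - f m) := by
    intro f
    rw [show (fun m => f m - x + a) = fun m => (-1) * ((x - a) - f m) by ext; ring,
      Finset.prod_mul_distrib]; simp
  rw [h, h, mul_div_mul_left _ _ (by simp)]

theorem LLaux.V_diff {N : ℕ} (hN : 1 ≤ N) (c : ℂ) (μ lam : Fin N → ℂ)
    (hinj : Function.Injective lam) (x : ℂ) (hx : ∀ j, (x - lam j) ^ 2 + c ^ 2 ≠ 0) :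
    Vp c μ lam x - Vm c μ lam x = -I * ∑ k, Xi μ lam k * Kk c x (lam k) := by
  have hf : ∀ j, (x - lam j - I * c) * (x - lam j + I * c) ≠ 0 := by
    intro j h
    apply hx j
    linear_combination h + c ^ 2 * I_sq
  have h1 : ∀ j, x - lam j - I * c ≠ 0 := fun j => left_ne_zero_of_mul (hf j)
  have h2 : ∀ j, x - lam j + I * c ≠ 0 := fun j => right_ne_zero_of_mul (hf j)
  have e1 : Vp c μ lam x = 1 - ∑ j, Xi μ lam j * (x - I * c - lam j)⁻¹ := by
    unfold Vp
    rw [LLaux.prod_flip, LLaux.pf hN μ lam hinj]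
    intro j h
    exact h1 j (by rw [← h]; ring)
  have e2 : Vm c μ lam x = 1 - ∑ j, Xi μ lam j * (x + I * c - lam j)⁻¹ := by
    unfold Vm
    have := LLaux.prod_flip μ lam x (-(I * c))
    simp only [← sub_eq_add_neg, sub_neg_eq_add] at this
    rw [this, LLaux.pf hN μ lam hinj]
    intro j h
    exact h2 j (by rw [← h]; ring)
  rw [e1, e2, sub_sub_sub_cancel_left, ← Finset.sum_sub_distrib, Finset.mul_sum]
  refine Finset.sum_congr rfl fun j _ => ?_
  unfold Kk
  have a1 : x - I * c - lam j ≠ 0 := by have := h1 j; rwa [show x - I * c - lam j = x - lam j - I * c by ring]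
  have a2 : x + I * c - lam j ≠ 0 := by have := h2 j; rwa [show x + I * c - lam j = x - lam j + I * c by ring]
  have hk : (x - lam j) ^ 2 + c ^ 2 = (x - I * c - lam j) * (x + I * c - lam j) := by
    linear_combination c ^ 2 * I_sq
  rw [hk]
  field_simp
  ring

/-- Equivalence of the two determinant formulas for the form factor of `(Ψ†(0))²Ψ²(0)`
when the two states have equal total momentum `P_λ = P_μ` (in which case
`𝒥 = 3(E_λ−E_μ)²`). -/
theorem F_eq_equal_momentum {N : ℕ} (hN : 1 ≤ N) (c : ℂ) (hc : c ≠ 0)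
    (μ lam : Fin N → ℂ) (hinj : Function.Injective lam)
    (hmulam : ∀ k j, μ k ≠ lam j)
    (hpm : ∀ j k, lam j - lam k + I * c ≠ 0 ∧ lam j - lam k - I * c ≠ 0)
    (lp ls : ℂ)
    (hp1 : ∀ j, (lp - lam j) ^ 2 + c ^ 2 ≠ 0)
    (hs1 : ∀ j, (ls - lam j) ^ 2 + c ^ 2 ≠ 0)
    (hV : ∀ j, Vp c μ lam (lam j) ≠ Vm c μ lam (lam j))
    (hVp : Vp c μ lam lp ≠ Vm c μ lam lp)
    (hVs : Vp c μ lam ls ≠ Vm c μ lam ls)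
    (hP : ∑ j, lam j = ∑ j, μ j) :
    (-1 : ℂ) ^ N * (Jcal μ lam / (6 * c)) *
        ((∏ j, ∏ k, (lam j - lam k + I * c)) * ∏ j, ∏ k, (lam j - μ k)⁻¹) *
        (∏ j, (Vp c μ lam (lam j) - Vm c μ lam (lam j))) *
        (1 + Umat c μ lam lp ls).det /
        ((Vp c μ lam lp - Vm c μ lam lp) * (Vp c μ lam ls - Vm c μ lam ls)) =
      (-1 : ℂ) ^ (N + 1) *
        (I * (∑ j, lam j ^ 2 - ∑ j, μ j ^ 2) ^ 2 / (2 * (N : ℂ) * c)) *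
        ((∏ j, ∏ k, (lam j - lam k + I * c)) * ∏ j, ∏ k, (lam j - μ k)⁻¹) *
        (∏ j, (Vp c μ lam (lam j) - Vm c μ lam (lam j))) *
        (1 + U2mat c μ lam lp).det /
        (Vp c μ lam lp - Vm c μ lam lp) := by
  have hNC : (N : ℂ) ≠ 0 := by exact_mod_cast (by omega : N ≠ 0)
  have hlam : ∀ k j, (lam k - lam j) ^ 2 + c ^ 2 ≠ 0 := by
    intro k j h
    have := mul_ne_zero (hpm k j).1 (hpm k j).2
    apply this
    linear_combination h - c ^ 2 * I_sq
  have hD := fun k => LLaux.V_diff hN c μ lam hinj (lam k) (hlam k)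
  have hS := LLaux.V_diff hN c μ lam hinj ls hs1
  have hX : ∑ j, Xi μ lam j = 0 := by rw [LLaux.sum_Xi hN μ lam hinj, hP, sub_self]
  have hd0 : ∀ j, Vp c μ lam (lam j) - Vm c μ lam (lam j) ≠ 0 := fun j => sub_ne_zero.2 (hV j)
  have hs0 : Vp c μ lam ls - Vm c μ lam ls ≠ 0 := sub_ne_zero.2 hVs
  have hp0 : Vp c μ lam lp - Vm c μ lam lp ≠ 0 := sub_ne_zero.2 hVp
  have key : (1 + Umat c μ lam lp ls).det
      = (-(Vp c μ lam ls - Vm c μ lam ls)) / (-I * N) * (1 + U2mat c μ lam lp).det := by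
    let d : Fin N → ℂ := fun j => Vp c μ lam (lam j) - Vm c μ lam (lam j)
    let M : Matrix (Fin N) (Fin N) ℂ :=
      1 + Matrix.of fun j k => I / d j * Xi μ lam j * Kk c (lam j) (lam k)
    let u : Fin N → ℂ := fun j => I / d j * Xi μ lam j * Kk c ls (lam j)
    let w : Fin N → ℂ := fun j => I / d j * (Xi μ lam j - 1)
    let v : Fin N → ℂ := fun k => Kk c lp (lam k)
    have hd : ∀ j, d j ≠ 0 := hd0
    have hu : d ⬝ᵥ u = -(Vp c μ lam ls - Vm c μ lam ls) := by
      have : d ⬝ᵥ u = I * ∑ k, Xi μ lam k * Kk c ls (lam k) := by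
        rw [Finset.mul_sum]
        refine Finset.sum_congr rfl fun j _ => ?_
        have := hd j
        simp only [u]
        field_simp
      rw [this, hS]; ring
    have hw : d ⬝ᵥ w = -I * N := by
      have : d ⬝ᵥ w = I * ∑ k, (Xi μ lam k - 1) := by
        rw [Finset.mul_sum]
        refine Finset.sum_congr rfl fun j _ => ?_
        have := hd j
        simp only [w]
        field_simp
      rw [this, Finset.sum_sub_distrib, hX]; simp
    have hM : d ᵥ* M = 0 := by
      simp only [M, Matrix.vecMul_add, Matrix.vecMul_one]
      ext k
      have : (d ᵥ* Matrix.of fun j k => I / d j * Xi μ lam j * Kk c (lam j) (lam k)) k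
          = I * ∑ j, Xi μ lam j * Kk c (lam k) (lam j) := by
        rw [Finset.mul_sum, Matrix.vecMul, dotProduct]
        refine Finset.sum_congr rfl fun j _ => ?_
        have := hd j
        have hsym : Kk c (lam j) (lam k) = Kk c (lam k) (lam j) := by
          unfold Kk; congr 1; ring
        simp only [Matrix.of_apply, hsym]
        field_simp
      rw [Pi.add_apply, this]
      simp only [d, hD k, Pi.zero_apply]
      ring
    have e1 : 1 + Umat c μ lam lp ls = M - vecMulVec u v := by
      ext j k
      simp only [M, u, v, d, Umat, Matrix.add_apply, Matrix.sub_apply, vecMulVec_apply,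
        Matrix.of_apply]
      ring
    have e2 : 1 + U2mat c μ lam lp = M - vecMulVec w v := by
      ext j k
      simp only [M, w, v, d, U2mat, U1mat, Matrix.add_apply, Matrix.sub_apply, vecMulVec_apply,
        Matrix.of_apply]
      ring
    rw [e1, e2, LLaux.det_rank M d u w v hM (by rw [hw]; simpa using hNC), hu, hw]
  have hJ : Jcal μ lam = 3 * (∑ j : Fin N, lam j ^ 2 - ∑ j, μ j ^ 2) ^ 2 := by
    unfold Jcal; rw [hP]; ring
  rw [key, hJ]
  generalize (1 + U2mat c μ lam lp).det = A
  generalize (∏ j : Fin N, ∏ k : Fin N, (lam j - lam k + I * c)) * ∏ j : Fin N, ∏ k : Fin N, (lam j - μ k)⁻¹ = B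
  generalize ∏ j : Fin N, (Vp c μ lam (lam j) - Vm c μ lam (lam j)) = Cc
  generalize Vp c μ lam ls - Vm c μ lam ls = S at hs0 ⊢
  generalize Vp c μ lam lp - Vm c μ lam lp = T at hp0 ⊢
  have hI : -S / (-I * N) = -I * S / N := by
    rw [div_eq_div_iff (by simpa using hNC) hNC]
    linear_combination (-S * N) * I_sq
  rw [hI, pow_succ]
  field_simp
  ring
end

section
/- Fix c ∈ ℂ with c ≠ 0, N ≥ 1 and an index ℓ ∈ {1,…,N}. Let μ_1,…,μ_N and pairwise distinct λ_1,…,λ_N be complex numbers with μ_k ≠ λ_j and λ_m−λ_j±ic ≠ 0, and let λ_p, λ_s be admissible auxiliary parameters. Then det_N(δ_{jk}+U_{jk}) = (V⁺_s−V⁻_s)·det_N(E^ℓ), where the matrix E^ℓ is given by E^ℓ_{ℓk} = K(λ_p,λ_k)/(V⁺_ℓ−V⁻_ℓ) for the row j = ℓ, and E^ℓ_{jk} = δ_{jk} + [i/(V⁺_j−V⁻_j)]·Ξ_j·K(λ_j,λ_k) for j ≠ ℓ. -/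
open Complex Finset Matrix

open LL

namespace LL

open Polynomial in
lemma aux_poly {N : ℕ} (μ lam : Fin N → ℂ) (hinj : Function.Injective lam) (z : ℂ) :
    ∏ m, (μ m - z) = ∏ m, (lam m - z) +
      ∑ j, Xi μ lam j * ∏ m ∈ Finset.univ.erase j, (lam m - z) := by
  have hdeg1 : ∀ a : ℂ, (C a - X : ℂ[X]).degree = 1 := by
    intro a
    rw [← neg_sub, degree_neg, degree_X_sub_C]
  have hlead : ∀ a : ℂ, (C a - X : ℂ[X]).leadingCoeff = -1 := by
    intro a
    rw [← neg_sub, leadingCoeff_neg, leadingCoeff_X_sub_C]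
  have hdeg : ∀ (f : Fin N → ℂ) (s : Finset (Fin N)),
      (∏ m ∈ s, (C (f m) - X : ℂ[X])).degree = s.card := by
    intro f s
    rw [degree_prod]
    simp [hdeg1]
  have hl : ∀ (f : Fin N → ℂ),
      (∏ m, (C (f m) - X : ℂ[X])).leadingCoeff = (-1) ^ N := by
    intro f
    rw [leadingCoeff_prod]
    simp [hlead]
  have key : (∏ m, (C (μ m) - X : ℂ[X])) = ∏ m, (C (lam m) - X) +
      ∑ j, C (Xi μ lam j) * ∏ m ∈ Finset.univ.erase j, (C (lam m) - X) := by
    apply Polynomial.eq_of_degree_sub_lt_of_eval_index_eq Finset.univ (v := lam) hinj.injOn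
    · rw [← sub_sub]
      refine lt_of_le_of_lt (degree_sub_le _ _) (max_lt ?_ ?_)
      · refine lt_of_lt_of_eq (degree_sub_lt ?_ ?_ ?_) (hdeg μ univ)
        · rw [hdeg, hdeg]
        · intro h0
          have := hl μ
          rw [h0] at this
          simp at this
          exact absurd this.symm (pow_ne_zero _ (by norm_num))
        · rw [hl, hl]
      · refine lt_of_le_of_lt (degree_sum_le _ _) ?_
        rw [Finset.sup_lt_iff (by exact WithBot.bot_lt_coe _)]
        intro j _
        refine lt_of_le_of_lt (degree_mul_le _ _) ?_
        refine lt_of_le_of_lt (add_le_add_left degree_C_le _) ?_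
        rw [hdeg, zero_add]
        exact_mod_cast Finset.card_erase_lt_of_mem (Finset.mem_univ j)
    · intro i _
      simp only [eval_add, eval_prod, eval_finsetSum, eval_mul, eval_sub, eval_C, eval_X]
      rw [Finset.prod_eq_zero (f := fun m => lam m - lam i) (Finset.mem_univ i) (sub_self (lam i)), zero_add,
        Finset.sum_eq_single i]
      · rw [Xi, div_mul_cancel₀]
        rw [Finset.prod_ne_zero_iff]
        intro m hm
        exact sub_ne_zero.2 (fun h => (Finset.mem_erase.1 hm).1 (hinj h))
      · intro j _ hj
        rw [Finset.prod_eq_zero (Finset.mem_erase.2 ⟨hj.symm, Finset.mem_univ i⟩)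
          (sub_self (lam i)), mul_zero]
      · simp
  have := congrArg (eval z) key
  simpa [eval_prod, eval_finsetSum] using this

lemma aux_frac {N : ℕ} (μ lam : Fin N → ℂ) (hinj : Function.Injective lam) (z : ℂ)
    (hz : ∀ m, lam m - z ≠ 0) :
    (∏ m, (μ m - z)) / ∏ m, (lam m - z) = 1 + ∑ j, Xi μ lam j / (lam j - z) := by
  have h0 : ∏ m, (lam m - z) ≠ 0 := Finset.prod_ne_zero_iff.2 fun m _ => hz m
  rw [div_eq_iff h0, aux_poly μ lam hinj, add_mul, one_mul, Finset.sum_mul]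
  congr 1
  refine Finset.sum_congr rfl fun j _ => ?_
  rw [← Finset.mul_prod_erase _ _ (Finset.mem_univ j)]
  field_simp [hz j]

lemma aux_D {N : ℕ} (c : ℂ) (μ lam : Fin N → ℂ) (hinj : Function.Injective lam) (x : ℂ)
    (hx : ∀ j, (x - lam j) ^ 2 + c ^ 2 ≠ 0) :
    ∑ j, I * Xi μ lam j * Kk c x (lam j) = -(Vp c μ lam x - Vm c μ lam x) := by
  have hf : ∀ j, (x - lam j) ^ 2 + c ^ 2 =
      (lam j - (x - I * c)) * (lam j - (x + I * c)) := by
    intro j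
    linear_combination (c ^ 2) * I_sq
  have h1 : ∀ j, lam j - (x - I * c) ≠ 0 := fun j h => hx j (by rw [hf, h, zero_mul])
  have h2 : ∀ j, lam j - (x + I * c) ≠ 0 := fun j h => hx j (by rw [hf, h, mul_zero])
  have e1 : Vp c μ lam x = 1 + ∑ j, Xi μ lam j / (lam j - (x - I * c)) := by
    rw [← aux_frac μ lam hinj _ h1, Vp]
    simp only [sub_add]
  have e2 : Vm c μ lam x = 1 + ∑ j, Xi μ lam j / (lam j - (x + I * c)) := by
    rw [← aux_frac μ lam hinj _ h2, Vm]
    simp only [sub_sub]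
  rw [e1, e2, add_sub_add_left_eq_sub, ← Finset.sum_sub_distrib, ← Finset.sum_neg_distrib]
  refine Finset.sum_congr rfl fun j _ => ?_
  rw [Kk, hf, div_sub_div _ _ (h1 j) (h2 j), ← neg_div, mul_div_assoc']
  congr 1
  ring

lemma aux_Ksymm (c x y : ℂ) : Kk c x y = Kk c y x := by
  rw [Kk, Kk, ← neg_sub y x, neg_sq]

end LL

/-- Row-replacement determinant identity: `det_N(δ+U) = (V⁺_s−V⁻_s)·det_N(E^ℓ)`, where
row `ℓ` of `E^ℓ` is `K(λ_p,λ_k)/(V⁺_ℓ−V⁻_ℓ)` and the other rows are those of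
`δ_{jk} + (i/(V⁺_j−V⁻_j))·Ξ_j·K(λ_j,λ_k)`. -/
theorem det_U_eq_Vs_det_E {N : ℕ} (hN : 1 ≤ N) (c : ℂ) (hc : c ≠ 0) (l : Fin N)
    (μ lam : Fin N → ℂ) (hinj : Function.Injective lam)
    (hmulam : ∀ k j, μ k ≠ lam j)
    (hpm : ∀ j k, lam j - lam k + I * c ≠ 0 ∧ lam j - lam k - I * c ≠ 0)
    (lp ls : ℂ)
    (hp1 : ∀ j, (lp - lam j) ^ 2 + c ^ 2 ≠ 0)
    (hs1 : ∀ j, (ls - lam j) ^ 2 + c ^ 2 ≠ 0)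
    (hV : ∀ j, Vp c μ lam (lam j) ≠ Vm c μ lam (lam j))
    (hVs : Vp c μ lam ls ≠ Vm c μ lam ls) :
    (1 + Umat c μ lam lp ls).det =
      (Vp c μ lam ls - Vm c μ lam ls) *
        (Matrix.of fun j k : Fin N =>
          if j = l then
            Kk c lp (lam k) / (Vp c μ lam (lam l) - Vm c μ lam (lam l))
          else
            (if j = k then (1 : ℂ) else 0) +
              I / (Vp c μ lam (lam j) - Vm c μ lam (lam j)) * Xi μ lam j *
                Kk c (lam j) (lam k)).det := by
  set D : Fin N → ℂ := fun j => Vp c μ lam (lam j) - Vm c μ lam (lam j) with hD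
  have hD0 : ∀ j, D j ≠ 0 := fun j => sub_ne_zero.2 (hV j)
  set Ds := Vp c μ lam ls - Vm c μ lam ls with hDs
  have hx : ∀ k j, (lam k - lam j) ^ 2 + c ^ 2 ≠ 0 := by
    intro k j
    have : (lam k - lam j) ^ 2 + c ^ 2 =
        (lam k - lam j + I * c) * (lam k - lam j - I * c) := by
      linear_combination (c ^ 2) * I_sq
    rw [this]
    exact mul_ne_zero (hpm k j).1 (hpm k j).2
  have hU : ∀ j k, D j * Umat c μ lam lp ls j k =
      I * Xi μ lam j * Kk c (lam k) (lam j) -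
        Kk c lp (lam k) * (I * Xi μ lam j * Kk c ls (lam j)) := by
    intro j k
    have := hD0 j
    simp only [Umat]
    change D j * (I / D j * _ * _) = _
    rw [aux_Ksymm c (lam k) (lam j)]
    field_simp
  have hsum : ∑ j, D j • (1 + Umat c μ lam lp ls) j = fun k => Ds * Kk c lp (lam k) := by
    funext k
    simp only [Finset.sum_apply, Pi.smul_apply, smul_eq_mul, Matrix.add_apply, mul_add, hU,
      Finset.sum_add_distrib, Finset.sum_sub_distrib, ← Finset.mul_sum]
    rw [aux_D c μ lam hinj _ (hx k), aux_D c μ lam hinj _ hs1]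
    simp only [Matrix.one_apply, mul_ite, mul_one, mul_zero, Finset.sum_ite_eq',
      Finset.mem_univ, if_true]
    simp only [hD, hDs]
    ring
  have h1 := Matrix.det_updateRow_sum (1 + Umat c μ lam lp ls) l D
  rw [hsum] at h1
  have h2 : (fun k => Ds * Kk c lp (lam k)) =
      (D l * Ds) • (fun k => Kk c lp (lam k) / D l) := by
    funext k
    have := hD0 l
    simp only [Pi.smul_apply, smul_eq_mul]
    field_simp
  rw [h2, Matrix.det_updateRow_smul, smul_eq_mul, mul_assoc] at h1
  rw [← mul_left_cancel₀ (hD0 l) h1]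
  congr 1
  symm
  refine Matrix.det_eq_of_forall_row_eq_smul_add_const
    (fun j => if j = l then 0 else I / D j * Xi μ lam j * Kk c ls (lam j) * D l) l (by simp) ?_
  intro j k
  by_cases hj : j = l
  · subst hj
    simp [hD]
  · have := hD0 l
    simp only [Matrix.of_apply, if_neg hj, Matrix.updateRow_self, Matrix.updateRow_ne hj,
      Matrix.add_apply, Matrix.one_apply, Umat]
    change _ + I / D j * _ * _ = _ + I / D j * _ * _ + _
    field_simp
    ring
end
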